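/- Let S be a nonnegative symmetric Borel measure on ℝ^d with ∫_{ℝ^d}(1+‖u‖)^{−d−1} dS(u) < ∞ and let s be the Radon–Nikodym derivative of S with respect to Lebesgue measure. Assume s is determining: the only function ψ : ℝ^d → ℂ that extends to an entire (holomorphic) function on ℂ^d and satisfies ∫_{ℝ^d} |ψ(u)|²/s(u) du < ∞ (with the convention that the integrand is +∞ wherever s(u) = 0 and ψ(u) ≠ 0) is ψ ≡ 0. Then S induces linear maximal rigidity on every bounded Borel set A ⊆ ℝ^d. -/

import Mathlib

open MeasureTheory Complex
open scoped ENNReal NNReal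
open scoped RealInnerProductSpace

noncomputable section

abbrev Ed (d : ℕ) := EuclideanSpace ℝ (Fin d)

/-- Fourier transform `f̂(u) = ∫ e^{-i⟨u,x⟩} f(x) dx`. -/
def FT {d : ℕ} (f : Ed d → ℂ) (u : Ed d) : ℂ :=
  ∫ x : Ed d, Complex.exp (-Complex.I * (⟪u, x⟫ : ℝ)) * f x

/-- `f` is bounded, measurable, with bounded support contained in `A`. -/
def IsCBS {d : ℕ} (A : Set (Ed d)) (f : Ed d → ℂ) : Prop :=
  Measurable f ∧ (∃ C : ℝ, ∀ x, ‖f x‖ ≤ C) ∧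
    Bornology.IsBounded (Function.support f) ∧ Function.support f ⊆ A

/-- `S` induces linear maximal rigidity on `A`. -/
def LMR {d : ℕ} (S : Measure (Ed d)) (A : Set (Ed d)) : Prop :=
  ∀ f : Ed d → ℂ, IsCBS A f → ∀ ε : ℝ, 0 < ε →
    ∃ h : Ed d → ℂ, IsCBS Aᶜ h ∧ (∫ u, ‖FT f u - FT h u‖ ^ 2 ∂S) < ε

/-! Suppose `w ∈ L²(S)` annihilates the Fourier transforms of all test functions supported outside
a ball containing `A`. Convolve the complex measure `w S` with the Fourier transform of a cutoff
`χ` equal to `1` on that ball. Replacing `χ` by its dilations `χ (c ·)`, `0 < c ≤ 1`, does not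
change the result, and as `c → 0` it tends to a multiple of `w S`; hence `w S` has an entire
density `ψ`. So `w` vanishes on the singular part of `S`, `s w = ψ` almost everywhere, and
`∫ |ψ|² / s ≤ ∫ |w|² dS < ∞`. As `s` is determining, `ψ = 0` and therefore `w = 0`: the transforms
in question are dense in `L²(S)`. -/

open Filter Topology TopologicalSpace Module
open scoped ContDiff Distributions LineDeriv

section ParametricHolomorphy

variable {E : Type*} [NormedAddCommGroup E] [NormedSpace ℂ E]

lemma norm_fderiv_le_of_forall_mem_ball_norm_le {F : E → ℂ} {z : E} {b : ℝ}
    (hF : DifferentiableOn ℂ F (Metric.ball z 1)) (hb : ∀ y ∈ Metric.ball z 1, ‖F y‖ ≤ b) :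
    ‖fderiv ℂ F z‖ ≤ b + b := by
  have hmaps : Set.MapsTo F (Metric.ball z 1) (Metric.closedBall (F z) (b + b)) := fun y hy => by
    rw [mem_closedBall_iff_norm]
    exact (norm_sub_le _ _).trans (add_le_add (hb y hy) (hb z (Metric.mem_ball_self one_pos)))
  simpa using Complex.norm_fderiv_le_div_of_mapsTo_ball hF hmaps one_pos

lemma differentiable_integral_mul_of_dominated {α : Type*} [TopologicalSpace α]
    [SecondCountableTopology α] [MeasurableSpace α] [OpensMeasurableSpace α] [FiniteDimensional ℂ E]
    {μ : Measure α} {w : α → ℂ} (hw : AEStronglyMeasurable w μ) {G : α → E → ℂ}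
    (hG : Continuous (Function.uncurry G)) (hGd : ∀ a, Differentiable ℂ (G a))
    (hdom : ∀ ρ : ℝ, ∃ b : α → ℝ, Integrable b μ ∧ ∀ a z, ‖z‖ ≤ ρ → ‖G a z * w a‖ ≤ b a) :
    Differentiable ℂ fun z => ∫ a, G a z * w a ∂μ := by
  intro z₀
  borelize E
  have := FiniteDimensional.proper ℂ E
  have := FiniteDimensional.proper ℂ (E →L[ℂ] ℂ)
  obtain ⟨b, hbi, hb⟩ := hdom (‖z₀‖ + 1 + 1)
  have hmeas (z : E) : AEStronglyMeasurable (fun a => G a z * w a) μ :=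
    (hG.comp (by fun_prop : Continuous fun a => (a, z))).aestronglyMeasurable.mul hw
  have hmeas' : AEStronglyMeasurable (fun a => w a • fderiv ℂ (G a) z₀) μ := by
    have h : Measurable fun a => fderiv ℂ (G a) z₀ :=
      (measurable_fderiv_with_param ℂ hG).comp
        (measurable_id.prodMk measurable_const : Measurable fun a => (a, z₀))
    exact hw.smul h.aestronglyMeasurable
  have hbound (a : α) (z : E) (hz : z ∈ Metric.ball z₀ 1) :
      ‖w a • fderiv ℂ (G a) z‖ ≤ b a + b a := by
    rw [← fderiv_mul_const (hGd a z)]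
    refine norm_fderiv_le_of_forall_mem_ball_norm_le
      ((hGd a).mul_const (w a)).differentiableOn fun y hy => hb a y ?_
    have hz' := norm_le_of_mem_closedBall (Metric.ball_subset_closedBall hz)
    have hy' := norm_le_of_mem_closedBall (Metric.ball_subset_closedBall hy)
    linarith
  exact (hasFDerivAt_integral_of_dominated_of_fderiv_le (𝕜 := ℂ)
    (F' := fun z a => w a • fderiv ℂ (G a) z)
    (Metric.ball_mem_nhds z₀ one_pos) (.of_forall hmeas)
    (hbi.mono' (hmeas z₀) (.of_forall fun a => hb a z₀ (by linarith))) hmeas'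
    (.of_forall hbound) (hbi.add hbi)
    (.of_forall fun a z _ => (hGd a z).hasFDerivAt.mul_const (w a))).differentiableAt

end ParametricHolomorphy

section TemperateGrowth

variable {E : Type*} [NormedAddCommGroup E] [MeasurableSpace E]

lemma exists_integrable_inv_one_add_norm_pow (μ : Measure E) [hμ : μ.HasTemperateGrowth] :
    ∃ N : ℕ, Integrable (fun u => ((1 + ‖u‖) ^ N)⁻¹) μ := by
  obtain ⟨N, hN⟩ := hμ.exists_integrable
  exact ⟨N, hN.congr (.of_forall fun u => by
    simp only [Real.rpow_neg (by positivity : 0 ≤ 1 + ‖u‖), Real.rpow_natCast])⟩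

lemma hasTemperateGrowth_of_lintegral_lt_top [OpensMeasurableSpace E] {μ : Measure E} {N : ℕ}
    (h : ∫⁻ u, ENNReal.ofReal (((1 + ‖u‖) ^ N)⁻¹) ∂μ < ⊤) : μ.HasTemperateGrowth := by
  have hmeas : Measurable fun u : E => ((1 + ‖u‖) ^ N)⁻¹ := by fun_prop
  have hint : Integrable (fun u => ((1 + ‖u‖) ^ N)⁻¹) μ :=
    ⟨hmeas.aestronglyMeasurable,
      (hasFiniteIntegral_iff_ofReal (.of_forall fun u => by positivity)).2 h⟩
  exact ⟨N, hint.congr (.of_forall fun u => by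
    simp only [Real.rpow_neg (by positivity : 0 ≤ 1 + ‖u‖), Real.rpow_natCast])⟩

lemma isLocallyFiniteMeasure_of_hasTemperateGrowth (μ : Measure E) [μ.HasTemperateGrowth] :
    IsLocallyFiniteMeasure μ := by
  obtain ⟨N, hN⟩ := exists_integrable_inv_one_add_norm_pow μ
  refine ⟨fun x => ⟨Metric.ball x 1, Metric.ball_mem_nhds x one_pos, ?_⟩⟩
  have hpos : 0 < ((1 + (‖x‖ + 1)) ^ N)⁻¹ := by positivity
  refine (measure_mono fun u hu => ?_).trans_lt (hN.measure_ge_lt_top hpos)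
  have hux : ‖u‖ ≤ ‖x‖ + 1 := by
    linarith [norm_le_norm_add_norm_sub' u x, mem_ball_iff_norm.1 hu]
  rw [Set.mem_ofPred_eq]
  gcongr

lemma exists_integrable_inv_one_add_norm_pow_mul_norm_of_memLp_two {F : Type*}
    [NormedAddCommGroup F] {μ : Measure E} [μ.HasTemperateGrowth] {w : E → F} (hw : MemLp w 2 μ) :
    ∃ N : ℕ, Integrable (fun u => ((1 + ‖u‖) ^ N)⁻¹ * ‖w u‖) μ := by
  obtain ⟨N, hN⟩ := exists_integrable_inv_one_add_norm_pow μ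
  have hw_sq : Integrable (fun u => ‖w u‖ ^ 2) μ := hw.integrable_norm_pow two_ne_zero
  refine ⟨N, (hN.add hw_sq).mono' (hN.1.mul hw.1.norm) (.of_forall fun u => ?_)⟩
  have hle : ((1 + ‖u‖) ^ N)⁻¹ ≤ 1 :=
    inv_le_one_of_one_le₀ (one_le_pow₀ (le_add_of_nonneg_right (norm_nonneg u)))
  have hpos : 0 ≤ ((1 + ‖u‖) ^ N)⁻¹ := by positivity
  rw [Real.norm_of_nonneg (by positivity), Pi.add_apply]
  nlinarith [sq_nonneg (((1 + ‖u‖) ^ N)⁻¹ - ‖w u‖), sq_nonneg ‖w u‖]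

end TemperateGrowth

section FourierLaplace

variable {V : Type*} [NormedAddCommGroup V] [InnerProductSpace ℝ V]

/-- The embedding of `V` into its complexified dual for which `laplace f (phase u)` is the
Fourier transform of `f` at `u`. -/
def phase : V →L[ℝ] V →L[ℝ] ℂ :=
  (ContinuousLinearMap.compL ℝ V ℝ ℂ (-I • ofRealCLM)).comp (innerSL ℝ)

lemma phase_apply (u x : V) : phase u x = -I * (⟪u, x⟫ : ℝ) := rfl

lemma re_phase_apply (u x : V) : (phase u x).re = 0 := by simp [phase_apply]

lemma norm_le_norm_phase (u : V) : ‖u‖ ≤ ‖phase u‖ := by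
  rcases eq_or_ne u 0 with rfl | hu
  · simp
  have h : ‖u‖ * ‖u‖ ≤ ‖phase u‖ * ‖u‖ := by
    simpa [phase_apply, ← sq] using (phase u).le_opNorm u
  exact le_of_mul_le_mul_right h (norm_pos_iff.2 hu)

lemma differentiable_eval (x : V) : Differentiable ℂ fun ζ : V →L[ℝ] ℂ => ζ x :=
  ((IsLinearMap.mk (fun _ _ => rfl) fun _ _ => rfl).with_bound ‖x‖ fun ζ => by
    simpa only [mul_comm] using ζ.le_opNorm x).differentiable

lemma norm_le_sum_norm_apply_basis {ι : Type*} [Fintype ι] (b : OrthonormalBasis ι ℝ V)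
    (ζ : V →L[ℝ] ℂ) : ‖ζ‖ ≤ ∑ i, ‖ζ (b i)‖ := by
  refine ζ.opNorm_le_bound (by positivity) fun x => ?_
  calc ‖ζ x‖ = ‖∑ i, ⟪b i, x⟫ • ζ (b i)‖ := by
        conv_lhs => rw [← b.sum_repr' x, map_sum]
        simp only [map_smul]
    _ ≤ ∑ i, ‖x‖ * ‖ζ (b i)‖ := norm_sum_le_of_le _ fun i _ => by
        rw [norm_smul]
        gcongr
        simpa using norm_inner_le_norm (𝕜 := ℝ) (b i) x
    _ = (∑ i, ‖ζ (b i)‖) * ‖x‖ := by rw [← Finset.mul_sum, mul_comm]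

variable [MeasurableSpace V] [BorelSpace V] [FiniteDimensional ℝ V] {Ω : Opens V}

/-- The Fourier–Laplace transform of `f`, as a function on the complexified dual `V →L[ℝ] ℂ`. -/
def laplace (f : V → ℂ) (ζ : V →L[ℝ] ℂ) : ℂ :=
  ∫ x, cexp (ζ x) * f x

lemma FT_eq_laplace_phase {d : ℕ} (f : Ed d → ℂ) (u : Ed d) : FT f u = laplace f (phase u) := rfl

lemma differentiable_laplace {f : V → ℂ} (hf : Integrable f)
    (hs : Bornology.IsBounded (Function.support f)) : Differentiable ℂ (laplace f) := by
  have := FiniteDimensional.right ℝ ℂ (V →L[ℝ] ℂ)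
  obtain ⟨R, hR⟩ := hs.subset_closedBall (0 : V)
  refine differentiable_integral_mul_of_dominated (G := fun (x : V) (ζ : V →L[ℝ] ℂ) => cexp (ζ x))
    hf.aestronglyMeasurable (by fun_prop) (fun x => ?_)
    fun ρ => ⟨fun x => Real.exp (ρ * R) * ‖f x‖, hf.norm.const_mul _, fun x ζ hζ => ?_⟩
  · exact (differentiable_eval x).cexp
  · by_cases hx : f x = 0
    · simp [hx]
    rw [norm_mul, Complex.norm_exp]
    have hxR : ‖x‖ ≤ R := by simpa using hR hx
    refine mul_le_mul_of_nonneg_right (Real.exp_le_exp.2 ?_) (norm_nonneg _)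
    calc (ζ x).re ≤ ‖ζ x‖ := re_le_norm _
      _ ≤ ρ * R := ζ.le_of_opNorm_le_of_le hζ hxR

lemma laplace_cexp_mul (f : V → ℂ) (z ζ : V →L[ℝ] ℂ) :
    laplace (fun x => cexp (z x) * f x) ζ = laplace f (ζ + z) := by
  simp only [laplace, ← mul_assoc, ← Complex.exp_add, add_apply]

lemma isLinearMap_laplace (ζ : V →L[ℝ] ℂ) :
    IsLinearMap ℂ fun χ : 𝓓(Ω, ℂ) => laplace χ ζ := by
  have hint (χ : 𝓓(Ω, ℂ)) : Integrable fun x => cexp (ζ x) * χ x :=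
    (by fun_prop : Continuous _).integrable_of_hasCompactSupport χ.hasCompactSupport.mul_left
  refine ⟨fun χ₁ χ₂ => ?_, fun c χ => ?_⟩
  · simp only [laplace, add_apply, mul_add]
    exact integral_add (hint χ₁) (hint χ₂)
  · simp only [laplace, smul_apply, mul_smul_comm]
    exact integral_smul c _

lemma laplace_comp_smul (f : V → ℂ) {c : ℝ} (hc : 0 < c) (ζ : V →L[ℝ] ℂ) :
    laplace (fun x => f (c • x)) ζ = (c ^ finrank ℝ V)⁻¹ • laplace f (c⁻¹ • ζ) := by
  have h := Measure.integral_comp_smul volume (fun x => cexp ((c⁻¹ • ζ) x) * f x) c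
  simp only [map_smul, smul_apply, smul_inv_smul₀ hc.ne'] at h
  rw [laplace, h, abs_of_pos (by positivity)]
  rfl

lemma laplace_lineDeriv (χ : 𝓓(Ω, ℂ)) (v : V) (ζ : V →L[ℝ] ℂ) :
    laplace (∂_{v} χ : 𝓓(Ω, ℂ)) ζ = -ζ v * laplace χ ζ := by
  have hderiv (x : V) : (∂_{v} χ : 𝓓(Ω, ℂ)) x = fderiv ℝ χ x v := by
    rw [TestFunction.lineDerivOp_eq_lineDerivCLM ℝ, TestFunction.lineDerivCLM_eq_fderivCLM,
      TestFunction.fderivCLM_apply_of_le _ le_top]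
  have hexp (x : V) : HasFDerivAt (fun x => cexp (ζ x)) (cexp (ζ x) • ζ) x := ζ.hasFDerivAt.cexp
  have hint (χ : 𝓓(Ω, ℂ)) {e : V → ℂ} (he : Continuous e) : Integrable fun x => e x * χ x :=
    (he.mul χ.continuous).integrable_of_hasCompactSupport χ.hasCompactSupport.mul_left
  have hparts := integral_mul_fderiv_eq_neg_fderiv_mul_of_integrable (μ := volume)
    (f := fun x => cexp (ζ x)) (g := χ) (v := v)
    (by simpa only [(hexp _).fderiv] using hint χ (by fun_prop))
    (by simpa only [hderiv] using hint (∂_{v} χ) (by fun_prop)) (hint χ (by fun_prop))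
    (fun x _ => (hexp x).differentiableAt)
    (fun x _ => χ.contDiff.differentiable (by simp) x)
  simp only [(hexp _).fderiv, ← hderiv] at hparts
  rw [laplace, hparts, laplace, ← integral_neg, ← integral_const_mul]
  exact integral_congr_ae (.of_forall fun x => by
    simp only [smul_apply, smul_eq_mul, neg_mul, neg_inj]; ring)

lemma exists_pow_mul_norm_laplace_le (ρ : ℝ) (N : ℕ) (χ : 𝓓(Ω, ℂ)) :
    ∃ C, ∀ ζ : V →L[ℝ] ℂ, (∀ x, (ζ x).re ≤ ρ * ‖x‖) → (1 + ‖ζ‖) ^ N * ‖laplace χ ζ‖ ≤ C := by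
  induction N generalizing χ with
  | zero =>
    refine ⟨∫ x, Real.exp (ρ * ‖x‖) * ‖χ x‖, fun ζ hζ => ?_⟩
    rw [pow_zero, one_mul]
    have hint : Integrable fun x => Real.exp (ρ * ‖x‖) * ‖χ x‖ :=
      (by fun_prop : Continuous _).integrable_of_hasCompactSupport χ.hasCompactSupport.norm.mul_left
    refine norm_integral_le_of_norm_le hint (.of_forall fun x => ?_)
    rw [norm_mul, Complex.norm_exp]
    gcongr
    exact hζ x
  | succ N ih =>
    let b := stdOrthonormalBasis ℝ V
    obtain ⟨C, hC⟩ := ih χ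
    choose D hD using fun i => ih (∂_{b i} χ : 𝓓(Ω, ℂ))
    refine ⟨C + ∑ i, D i, fun ζ hζ => ?_⟩
    calc (1 + ‖ζ‖) ^ (N + 1) * ‖laplace χ ζ‖
        = (1 + ‖ζ‖) ^ N * ‖laplace χ ζ‖ + ‖ζ‖ * ((1 + ‖ζ‖) ^ N * ‖laplace χ ζ‖) := by ring
      _ ≤ (1 + ‖ζ‖) ^ N * ‖laplace χ ζ‖
            + (∑ i, ‖ζ (b i)‖) * ((1 + ‖ζ‖) ^ N * ‖laplace χ ζ‖) := by
          gcongr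
          exact norm_le_sum_norm_apply_basis b ζ
      _ = (1 + ‖ζ‖) ^ N * ‖laplace χ ζ‖
            + ∑ i, (1 + ‖ζ‖) ^ N * ‖laplace (∂_{b i} χ : 𝓓(Ω, ℂ)) ζ‖ := by
          rw [Finset.sum_mul]
          simp only [laplace_lineDeriv, norm_mul, norm_neg, mul_left_comm]
      _ ≤ C + ∑ i, D i := add_le_add (hC ζ hζ) (Finset.sum_le_sum fun i _ => hD i ζ hζ)

lemma exists_norm_laplace_phase_sub_le (ρ : ℝ) (N : ℕ) (χ : 𝓓(Ω, ℂ)) :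
    ∃ C, ∀ (u : V) (z : V →L[ℝ] ℂ), ‖z‖ ≤ ρ →
      ‖laplace χ (phase u - z)‖ ≤ C * ((1 + ‖u‖) ^ N)⁻¹ := by
  obtain ⟨C, hC⟩ := exists_pow_mul_norm_laplace_le ρ N χ
  refine ⟨(1 + ρ) ^ N * C, fun u z hz => ?_⟩
  have hre (x : V) : ((phase u - z) x).re ≤ ρ * ‖x‖ := by
    rw [sub_apply, sub_re, re_phase_apply, zero_sub, ← neg_re]
    exact (re_le_norm _).trans (by simpa using z.le_of_opNorm_le hz x)
  have hnorm : 1 + ‖u‖ ≤ (1 + ρ) * (1 + ‖phase u - z‖) := by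
    have h := (norm_le_norm_phase u).trans (norm_le_norm_sub_add (phase u) z)
    nlinarith [norm_nonneg z, norm_nonneg (phase u - z)]
  have hρ : 0 ≤ 1 + ρ := by linarith [norm_nonneg z]
  rw [← div_eq_mul_inv, le_div_iff₀' (by positivity)]
  calc (1 + ‖u‖) ^ N * ‖laplace χ (phase u - z)‖
      ≤ ((1 + ρ) * (1 + ‖phase u - z‖)) ^ N * ‖laplace χ (phase u - z)‖ := by gcongr
    _ = (1 + ρ) ^ N * ((1 + ‖phase u - z‖) ^ N * ‖laplace χ (phase u - z)‖) := by
        rw [mul_pow, mul_assoc]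
    _ ≤ (1 + ρ) ^ N * C := by gcongr; exact hC _ hre

lemma differentiable_laplace_testFunction (χ : 𝓓(Ω, ℂ)) : Differentiable ℂ (laplace χ) :=
  differentiable_laplace (χ.continuous.integrable_of_hasCompactSupport χ.hasCompactSupport)
    (χ.hasCompactSupport.isCompact.isBounded.subset (subset_tsupport χ))

lemma continuous_laplace (χ : 𝓓(Ω, ℂ)) : Continuous (laplace χ) :=
  (differentiable_laplace_testFunction χ).continuous

lemma integrable_pow_mul_laplace_phase {μ : Measure V} [μ.HasTemperateGrowth] (n : ℕ)
    (χ : 𝓓(Ω, ℂ)) : Integrable (fun u => (1 + ‖u‖) ^ n * ‖laplace χ (phase u)‖) μ := by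
  obtain ⟨N, hN⟩ := exists_integrable_inv_one_add_norm_pow μ
  obtain ⟨C, hC⟩ := exists_norm_laplace_phase_sub_le 0 (n + N) χ
  have hcont := (continuous_laplace χ).comp phase.continuous
  refine (hN.const_mul C).mono' (by fun_prop) (.of_forall fun u => ?_)
  rw [Real.norm_of_nonneg (by positivity)]
  calc (1 + ‖u‖) ^ n * ‖laplace χ (phase u)‖
      ≤ (1 + ‖u‖) ^ n * (C * ((1 + ‖u‖) ^ (n + N))⁻¹) := by
        gcongr
        simpa using hC u 0 (by simp)
    _ = C * ((1 + ‖u‖) ^ N)⁻¹ := by field_simp; ring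

lemma integrable_laplace_phase {μ : Measure V} [μ.HasTemperateGrowth] (χ : 𝓓(Ω, ℂ)) :
    Integrable (fun u => laplace χ (phase u)) μ := by
  refine (integrable_norm_iff ?_).1 (by simpa using integrable_pow_mul_laplace_phase (μ := μ) 0 χ)
  exact ((continuous_laplace χ).comp phase.continuous).aestronglyMeasurable

lemma memLp_two_laplace_phase {μ : Measure V} [μ.HasTemperateGrowth] (χ : 𝓓(Ω, ℂ)) :
    MemLp (fun u => laplace χ (phase u)) 2 μ := by
  have hint : Integrable (fun u => laplace χ (phase u)) μ := integrable_laplace_phase χ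
  obtain ⟨C, hC⟩ := exists_norm_laplace_phase_sub_le 0 0 χ
  refine (memLp_two_iff_integrable_sq_norm hint.1).2
    ((hint.norm.const_mul C).mono' (hint.1.norm.pow 2) (.of_forall fun u => ?_))
  rw [Real.norm_of_nonneg (by positivity), sq]
  gcongr
  simpa using hC u 0 (by simp)

lemma fourier_eq_laplace_phase (f : V → ℂ) (u : V) :
    FourierTransform.fourier f u = laplace f (phase ((2 * Real.pi) • u)) := by
  rw [Real.fourier_eq']
  refine integral_congr_ae (.of_forall fun x => ?_)
  simp only [smul_eq_mul, phase_apply, real_inner_smul_left, real_inner_comm u x]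
  push_cast
  ring_nf

lemma integral_laplace_phase (χ : 𝓓(Ω, ℂ)) :
    ∫ y : V, laplace χ (phase y) = (2 * Real.pi) ^ finrank ℝ V * χ 0 := by
  have hπ : (0 : ℝ) < 2 * Real.pi := by positivity
  have hint : Integrable (FourierTransform.fourier (χ : V → ℂ)) := by
    rw [funext (fourier_eq_laplace_phase χ)]
    exact (integrable_laplace_phase χ).comp_smul hπ.ne'
  have hinv := congrFun (χ.continuous.fourierInv_fourier_eq
    (χ.continuous.integrable_of_hasCompactSupport χ.hasCompactSupport) hint) 0
  simp only [Real.fourierInv_eq', inner_zero_right, mul_zero, ofReal_zero, zero_mul,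
    Complex.exp_zero, one_smul, fourier_eq_laplace_phase] at hinv
  rw [Measure.integral_comp_smul volume (fun y => laplace χ (phase y)),
    abs_of_pos (by positivity), inv_smul_eq_iff₀ (by positivity)] at hinv
  simpa using hinv

end FourierLaplace

section Mollify

variable {V : Type*} [NormedAddCommGroup V] [InnerProductSpace ℝ V] [FiniteDimensional ℝ V]
  [MeasurableSpace V] [BorelSpace V] {Ω : Opens V} {μ : Measure V} {w : V → ℂ} {N : ℕ}

/-- The convolution of the complex measure `w μ` with the Fourier transform of `χ`, continued to
the complexified dual; this is the density that `w μ` turns out to have when `w` annihilates the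
Fourier transforms of all test functions supported far from the origin. -/
def mollify (μ : Measure V) (w χ : V → ℂ) (z : V →L[ℝ] ℂ) : ℂ :=
  ∫ u, laplace χ (phase u - z) * w u ∂μ

lemma exists_norm_laplace_phase_sub_mul_le (ρ : ℝ) (N : ℕ) (w : V → ℂ) (χ : 𝓓(Ω, ℂ)) :
    ∃ C, ∀ (u : V) (z : V →L[ℝ] ℂ), ‖z‖ ≤ ρ →
      ‖laplace χ (phase u - z) * w u‖ ≤ C * (((1 + ‖u‖) ^ N)⁻¹ * ‖w u‖) := by
  obtain ⟨C, hC⟩ := exists_norm_laplace_phase_sub_le ρ N χ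
  refine ⟨C, fun u z hz => ?_⟩
  rw [norm_mul, ← mul_assoc]
  gcongr
  exact hC u z hz

lemma integrable_laplace_phase_sub_mul (hw : AEStronglyMeasurable w μ)
    (hwN : Integrable (fun u => ((1 + ‖u‖) ^ N)⁻¹ * ‖w u‖) μ) (χ : 𝓓(Ω, ℂ)) (z : V →L[ℝ] ℂ) :
    Integrable (fun u => laplace χ (phase u - z) * w u) μ := by
  obtain ⟨C, hC⟩ := exists_norm_laplace_phase_sub_mul_le ‖z‖ N w χ
  have hcont : Continuous fun u : V => laplace χ (phase u - z) :=
    (continuous_laplace χ).comp (phase.continuous.sub continuous_const)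
  exact (hwN.const_mul C).mono' (hcont.aestronglyMeasurable.mul hw)
    (.of_forall fun u => hC u z le_rfl)

lemma differentiable_mollify (hw : AEStronglyMeasurable w μ)
    (hwN : Integrable (fun u => ((1 + ‖u‖) ^ N)⁻¹ * ‖w u‖) μ) (χ : 𝓓(Ω, ℂ)) :
    Differentiable ℂ (mollify μ w χ) := by
  have := FiniteDimensional.right ℝ ℂ (V →L[ℝ] ℂ)
  refine differentiable_integral_mul_of_dominated hw
    (G := fun u z => laplace χ (phase u - z)) ?_ (fun u => ?_) fun ρ => ?_
  · exact (continuous_laplace χ).comp (by fun_prop)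
  · exact (differentiable_laplace_testFunction χ).comp (by fun_prop)
  · obtain ⟨C, hC⟩ := exists_norm_laplace_phase_sub_mul_le ρ N w χ
    exact ⟨_, hwN.const_mul C, hC⟩

lemma mollify_sub (hw : AEStronglyMeasurable w μ)
    (hwN : Integrable (fun u => ((1 + ‖u‖) ^ N)⁻¹ * ‖w u‖) μ) (χ₁ χ₂ : 𝓓(Ω, ℂ))
    (z : V →L[ℝ] ℂ) : mollify μ w (χ₁ - χ₂ : 𝓓(Ω, ℂ)) z = mollify μ w χ₁ z - mollify μ w χ₂ z := by
  rw [mollify, mollify, mollify, ← integral_sub (integrable_laplace_phase_sub_mul hw hwN χ₁ z)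
    (integrable_laplace_phase_sub_mul hw hwN χ₂ z)]
  simp only [(isLinearMap_laplace _).map_sub, sub_mul]

lemma mollify_eq_zero (hann : ∀ h : 𝓓(Ω, ℂ), ∫ u, laplace h (phase u) * w u ∂μ = 0)
    (h : 𝓓(Ω, ℂ)) (z : V →L[ℝ] ℂ) : mollify μ w h z = 0 := by
  let modulated : 𝓓(Ω, ℂ) :=
    { toFun := fun x => cexp ((-z) x) * h x
      contDiff' := (-z).contDiff.cexp.mul h.contDiff
      hasCompactSupport' := h.hasCompactSupport.mul_left
      tsupport_subset' := (tsupport_mul_subset_right).trans h.tsupport_subset }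
  rw [← hann modulated, mollify]
  refine integral_congr_ae (.of_forall fun u => ?_)
  simp only [modulated, TestFunction.coe_mk, laplace_cexp_mul, sub_eq_add_neg]

lemma mollify_congr (hw : AEStronglyMeasurable w μ)
    (hwN : Integrable (fun u => ((1 + ‖u‖) ^ N)⁻¹ * ‖w u‖) μ)
    (hann : ∀ h : 𝓓(Ω, ℂ), ∫ u, laplace h (phase u) * w u ∂μ = 0) {χ₁ χ₂ : 𝓓(⊤, ℂ)}
    {U : Set V} (hU : IsOpen U) (hΩ : (Ω : Set V)ᶜ ⊆ U) (hχ : Set.EqOn χ₁ χ₂ U) :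
    mollify μ w χ₁ = mollify μ w χ₂ := by
  have hsupp : Function.support (χ₁ - χ₂ : 𝓓((⊤ : Opens V), ℂ)) ⊆ Uᶜ := fun x hx hxU =>
    hx (by simp [hχ hxU])
  have htsupp : tsupport (χ₁ - χ₂ : 𝓓((⊤ : Opens V), ℂ)) ⊆ Ω :=
    (closure_minimal hsupp hU.isClosed_compl).trans (Set.compl_subset_comm.1 hΩ)
  let χ : 𝓓(Ω, ℂ) := ⟨_, (χ₁ - χ₂).contDiff, (χ₁ - χ₂).hasCompactSupport, htsupp⟩
  funext z
  rw [← sub_eq_zero, ← mollify_sub hw hwN]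
  exact mollify_eq_zero hann χ z

lemma integral_smul_mollify_phase [SFinite μ] (hw : AEStronglyMeasurable w μ)
    (hwN : Integrable (fun u => ((1 + ‖u‖) ^ N)⁻¹ * ‖w u‖) μ) (χ : 𝓓(Ω, ℂ)) {g : V → ℝ}
    (hg : Continuous g) (hgs : HasCompactSupport g) :
    ∫ v, g v • mollify μ w χ (phase v)
      = ∫ u, (∫ v, g v • laplace χ (phase (u - v))) * w u ∂μ := by
  obtain ⟨ρ, hρ⟩ := hgs.isCompact.exists_bound_of_continuousOn phase.continuous.continuousOn
  obtain ⟨C, hC⟩ := exists_norm_laplace_phase_sub_mul_le ρ N w χ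
  have hcont : Continuous fun p : V × V => laplace χ (phase p.2 - phase p.1) :=
    (continuous_laplace χ).comp (by fun_prop)
  have hint : Integrable (fun p : V × V => g p.1 • (laplace χ (phase p.2 - phase p.1) * w p.2))
      (volume.prod μ) := by
    refine ((hg.integrable_of_hasCompactSupport hgs).norm.mul_prod (hwN.const_mul C)).mono'
      ((hg.comp continuous_fst).aestronglyMeasurable.smul
        (hcont.aestronglyMeasurable.mul hw.comp_snd)) (.of_forall fun p => ?_)
    by_cases hp : g p.1 = 0
    · simp [hp]
    rw [norm_smul]
    gcongr
    exact hC _ _ (hρ _ (subset_tsupport g hp))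
  simp only [mollify, ← integral_smul, map_sub, ← integral_mul_const, smul_mul_assoc]
  exact integral_integral_swap hint

lemma integral_smul_laplace_comp_smul (g : V → ℝ) (f : V → ℂ) {c : ℝ} (hc : 0 < c) (u : V) :
    ∫ v, g v • laplace (fun x => f (c • x)) (phase (u - v))
      = ∫ y, g (u - c • y) • laplace f (phase y) := by
  have hscale := Measure.integral_comp_smul volume
    (fun y => g (u - y) • laplace f (phase (c⁻¹ • y))) c
  simp only [inv_smul_smul₀ hc.ne'] at hscale
  rw [hscale, abs_of_pos (by positivity), ← integral_smul,
    ← integral_sub_left_eq_self _ volume u]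
  simp only [laplace_comp_smul f hc, map_smul, sub_sub_cancel, smul_comm (g _)]

variable {g : V → ℝ}

lemma continuous_integral_comp_sub_smul (hg : Continuous g) (hgs : HasCompactSupport g)
    (χ : 𝓓(Ω, ℂ)) :
    Continuous fun p : ℝ × V => ∫ y, g (p.2 - p.1 • y) • laplace χ (phase y) := by
  obtain ⟨M, hM⟩ := hgs.exists_bound_of_continuous hg
  have hcont : Continuous fun y : V => laplace χ (phase y) :=
    (continuous_laplace χ).comp phase.continuous
  refine continuous_of_dominated (bound := fun y => M * ‖laplace χ (phase y)‖)
    (fun p => (by fun_prop : Continuous _).aestronglyMeasurable)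
    (fun p => .of_forall fun y => ?_) ((integrable_laplace_phase χ).norm.const_mul M)
    (.of_forall fun y => by fun_prop)
  rw [norm_smul]
  gcongr
  exact hM _

lemma exists_norm_integral_comp_sub_smul_le (hg : Continuous g) (hgs : HasCompactSupport g)
    (N : ℕ) (χ : 𝓓(Ω, ℂ)) : ∃ C, ∀ c ∈ Set.Ioc (0 : ℝ) 1, ∀ u : V,
      ‖∫ y, g (u - c • y) • laplace χ (phase y)‖ ≤ C * ((1 + ‖u‖) ^ N)⁻¹ := by
  obtain ⟨M, hM⟩ := (hgs.mul_left (f := fun v => (1 + ‖v‖) ^ N)).exists_bound_of_continuous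
    (by fun_prop)
  refine ⟨∫ y : V, M * ((1 + ‖y‖) ^ N * ‖laplace χ (phase y)‖), fun c hc u => ?_⟩
  rw [← integral_mul_const]
  refine norm_integral_le_of_norm_le
    (((integrable_pow_mul_laplace_phase N χ).const_mul M).mul_const _) (.of_forall fun y => ?_)
  have hcy : ‖c • y‖ ≤ ‖y‖ := by
    rw [norm_smul, Real.norm_of_nonneg hc.1.le]
    exact mul_le_of_le_one_left (norm_nonneg y) hc.2
  have hpeetre : 1 + ‖u‖ ≤ (1 + ‖u - c • y‖) * (1 + ‖y‖) := by
    nlinarith [norm_le_norm_sub_add u (c • y), norm_nonneg (u - c • y), norm_nonneg y]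
  rw [norm_smul, ← div_eq_mul_inv, le_div_iff₀' (by positivity)]
  calc (1 + ‖u‖) ^ N * (‖g (u - c • y)‖ * ‖laplace χ (phase y)‖)
      ≤ ((1 + ‖u - c • y‖) * (1 + ‖y‖)) ^ N * (‖g (u - c • y)‖ * ‖laplace χ (phase y)‖) := by
        gcongr
    _ = ‖(1 + ‖u - c • y‖) ^ N * g (u - c • y)‖ * ((1 + ‖y‖) ^ N * ‖laplace χ (phase y)‖) := by
        rw [norm_mul, Real.norm_of_nonneg (by positivity : 0 ≤ (1 + ‖u - c • y‖) ^ N), mul_pow]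
        ring
    _ ≤ M * ((1 + ‖y‖) ^ N * ‖laplace χ (phase y)‖) := by
        gcongr
        exact hM _

lemma tendsto_integral_comp_sub_smul_mul (hw : AEStronglyMeasurable w μ)
    (hwN : Integrable (fun u => ((1 + ‖u‖) ^ N)⁻¹ * ‖w u‖) μ) (hg : Continuous g)
    (hgs : HasCompactSupport g) (χ : 𝓓(Ω, ℂ)) :
    Tendsto (fun c : ℝ => ∫ u, (∫ y, g (u - c • y) • laplace χ (phase y)) * w u ∂μ) (𝓝[>] 0)
      (𝓝 (((2 * Real.pi) ^ finrank ℝ V * χ 0) * ∫ u, g u • w u ∂μ)) := by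
  obtain ⟨C, hC⟩ := exists_norm_integral_comp_sub_smul_le hg hgs N χ
  have hcont := continuous_integral_comp_sub_smul hg hgs χ
  rw [← integral_const_mul]
  refine tendsto_integral_filter_of_dominated_convergence
    (fun u => C * (((1 + ‖u‖) ^ N)⁻¹ * ‖w u‖))
    (.of_forall fun c => (hcont.comp (by fun_prop :
      Continuous fun u : V => (c, u))).aestronglyMeasurable.mul hw)
    ?_ (hwN.const_mul C) (.of_forall fun u => ?_)
  · filter_upwards [Ioc_mem_nhdsGT one_pos] with c hc
    refine .of_forall fun u => ?_
    rw [norm_mul, ← mul_assoc]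
    gcongr
    exact hC c hc u
  · have hlim : Tendsto (fun c : ℝ => ∫ y, g (u - c • y) • laplace χ (phase y)) (𝓝 0)
        (𝓝 (g u • ((2 * Real.pi) ^ finrank ℝ V * χ 0))) := by
      simpa only [Function.comp_def, zero_smul, sub_zero, integral_smul, integral_laplace_phase]
        using (hcont.comp (by fun_prop : Continuous fun c : ℝ => (c, u))).tendsto 0
    rw [mul_smul_comm, ← smul_mul_assoc]
    exact (hlim.mono_left nhdsWithin_le_nhds).mul_const (w u)

/-- The dilation `x ↦ χ (c x)` of a test function. -/
def dilate {F : Type*} [NormedAddCommGroup F] [NormedSpace ℝ F] {c : ℝ} (hc : c ≠ 0)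
    (χ : 𝓓((⊤ : Opens V), F)) : 𝓓((⊤ : Opens V), F) where
  toFun x := χ (c • x)
  contDiff' := χ.contDiff.comp (contDiff_const_smul c)
  hasCompactSupport' := χ.hasCompactSupport.comp_smul hc
  tsupport_subset' := Set.subset_univ _

lemma integral_smul_mollify_phase_eq [SFinite μ] (hw : AEStronglyMeasurable w μ)
    (hwN : Integrable (fun u => ((1 + ‖u‖) ^ N)⁻¹ * ‖w u‖) μ)
    (hann : ∀ h : 𝓓(Ω, ℂ), ∫ u, laplace h (phase u) * w u ∂μ = 0) {R : ℝ} (hR : 0 < R)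
    (hΩ : (Ω : Set V)ᶜ ⊆ Metric.ball 0 R) {χ : 𝓓(⊤, ℂ)} (hχ : ∀ x ∈ Metric.ball 0 R, χ x = 1)
    (hg : Continuous g) (hgs : HasCompactSupport g) :
    ∫ v, g v • mollify μ w χ (phase v) = (2 * Real.pi) ^ finrank ℝ V * ∫ u, g u • w u ∂μ := by
  have hdilate (c : ℝ) (hc : c ∈ Set.Ioc (0 : ℝ) 1) :
      ∫ u, (∫ y, g (u - c • y) • laplace χ (phase y)) * w u ∂μ
        = ∫ v, g v • mollify μ w χ (phase v) := by
    have hχc : mollify μ w χ = mollify μ w (dilate hc.1.ne' χ) := by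
      refine mollify_congr hw hwN hann Metric.isOpen_ball hΩ fun x hx => ?_
      have hcx : c • x ∈ Metric.ball 0 R := by
        rw [mem_ball_zero_iff, norm_smul, Real.norm_of_nonneg hc.1.le] at *
        exact (mul_le_of_le_one_left (norm_nonneg x) hc.2).trans_lt hx
      exact (hχ x hx).trans (hχ _ hcx).symm
    rw [hχc, integral_smul_mollify_phase hw hwN _ hg hgs]
    simp only [← integral_smul_laplace_comp_smul g χ hc.1]
    rfl
  have hlim := tendsto_integral_comp_sub_smul_mul hw hwN hg hgs χ
  rw [hχ 0 (Metric.mem_ball_self hR), mul_one] at hlim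
  refine tendsto_nhds_unique (tendsto_const_nhds.congr' ?_) hlim
  filter_upwards [Ioc_mem_nhdsGT one_pos] with c hc using (hdilate c hc).symm

end Mollify

section LebesgueParts

variable {V F : Type*} [NormedAddCommGroup V] [NormedSpace ℝ V] [FiniteDimensional ℝ V]
  [MeasurableSpace V] [BorelSpace V] [NormedAddCommGroup F] [NormedSpace ℝ F] {μ ν : Measure V}

lemma locallyIntegrable_toReal_smul_of_withDensity {s : V → ℝ≥0∞} (hs : Measurable s)
    (hs_top : ∀ᵐ v ∂ν, s v < ⊤) {f : V → F} (hf : LocallyIntegrable f (ν.withDensity s)) :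
    LocallyIntegrable (fun v => (s v).toReal • f v) ν := by
  refine locallyIntegrable_iff.2 fun K hK => ?_
  have hfK := hf.integrableOn_isCompact hK
  rw [IntegrableOn, restrict_withDensity hK.measurableSet] at hfK
  exact (integrable_withDensity_iff_integrable_smul' hs (ae_restrict_of_ae hs_top)).1 hfK

variable [CompleteSpace F]

lemma ae_eq_zero_of_mutuallySingular_of_integral_contDiff_smul (hμν : μ ⟂ₘ ν) {f h : V → F}
    (hf : LocallyIntegrable f μ) (hh : LocallyIntegrable h ν)
    (hfh : ∀ g : V → ℝ, ContDiff ℝ ∞ g → HasCompactSupport g →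
      ∫ v, g v • f v ∂μ + ∫ v, g v • h v ∂ν = 0) :
    f =ᵐ[μ] 0 ∧ h =ᵐ[ν] 0 := by
  classical
  obtain ⟨N, -, hμN, hνN⟩ := hμν
  have hk_μ : N.piecewise h f =ᵐ[μ] f := by
    filter_upwards [measure_eq_zero_iff_ae_notMem.1 hμN] with v hv
    exact Set.piecewise_eq_of_notMem _ _ _ hv
  have hk_ν : N.piecewise h f =ᵐ[ν] h := by
    filter_upwards [measure_eq_zero_iff_ae_notMem.1 hνN] with v hv
    exact Set.piecewise_eq_of_mem _ _ _ (not_not.1 hv)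
  have hk_loc : LocallyIntegrable (N.piecewise h f) (μ + ν) := locallyIntegrable_iff.2 fun K hK =>
    (((hf.congr hk_μ.symm).integrableOn_isCompact hK).add_measure
      ((hh.congr hk_ν.symm).integrableOn_isCompact hK))
  have hk : ∀ᵐ v ∂(μ + ν), N.piecewise h f v = 0 := by
    refine ae_eq_zero_of_integral_contDiff_smul_eq_zero hk_loc fun g hg hgs => ?_
    have hint := hk_loc.integrable_smul_left_of_hasCompactSupport hg.continuous hgs
    rw [integral_add_measure hint.left_of_add_measure hint.right_of_add_measure,
      ← hfh g hg hgs]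
    congr 1
    · exact integral_congr_ae (hk_μ.mono fun v hv => congrArg (g v • ·) hv)
    · exact integral_congr_ae (hk_ν.mono fun v hv => congrArg (g v • ·) hv)
  rw [ae_add_measure_iff] at hk
  exact ⟨hk_μ.symm.trans hk.1, hk_ν.symm.trans hk.2⟩

lemma ae_eq_zero_and_rnDeriv_smul_ae_eq_of_integral_contDiff_smul [SigmaFinite μ] [SigmaFinite ν]
    {f h : V → F} (hf : LocallyIntegrable f μ) (hh : LocallyIntegrable h ν)
    (hfh : ∀ g : V → ℝ, ContDiff ℝ ∞ g → HasCompactSupport g →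
      ∫ v, g v • f v ∂μ = ∫ v, g v • h v ∂ν) :
    f =ᵐ[μ.singularPart ν] 0 ∧ (fun v => (μ.rnDeriv ν v).toReal • f v) =ᵐ[ν] h := by
  have hs := Measure.measurable_rnDeriv μ ν
  have hs_top := Measure.rnDeriv_lt_top μ ν
  have hf_sing : LocallyIntegrable f (μ.singularPart ν) :=
    hf.mono_measure (Measure.singularPart_le μ ν)
  have hf_ac := locallyIntegrable_toReal_smul_of_withDensity hs hs_top
    (hf.mono_measure (Measure.withDensity_rnDeriv_le μ ν))
  have hzero := ae_eq_zero_of_mutuallySingular_of_integral_contDiff_smul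
    (Measure.mutuallySingular_singularPart μ ν) hf_sing (hf_ac.sub hh) fun g hg hgs => ?_
  · exact hzero.imp_right fun h => h.mono fun v hv => sub_eq_zero.1 hv
  · have hint := hf.integrable_smul_left_of_hasCompactSupport hg.continuous hgs
    have hdensity : ∫ v, g v • f v ∂ν.withDensity (μ.rnDeriv ν)
        = ∫ v, g v • (μ.rnDeriv ν v).toReal • f v ∂ν := by
      simp only [integral_withDensity_eq_integral_toReal_smul hs hs_top, smul_comm (g _)]
    have hsplit : ∫ v, g v • f v ∂μ = ∫ v, g v • f v ∂μ.singularPart ν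
        + ∫ v, g v • (μ.rnDeriv ν v).toReal • f v ∂ν := by
      rw [← hdensity, ← integral_add_measure
        (hint.mono_measure (Measure.singularPart_le μ ν))
        (hint.mono_measure (Measure.withDensity_rnDeriv_le μ ν)),
        Measure.singularPart_add_rnDeriv]
    simp only [Pi.sub_apply, smul_sub]
    rw [integral_sub (hf_ac.integrable_smul_left_of_hasCompactSupport hg.continuous hgs)
      (hh.integrable_smul_left_of_hasCompactSupport hg.continuous hgs), ← add_sub_assoc, ← hsplit,
      hfh g hg hgs, sub_self]

end LebesgueParts

section RnDeriv

variable {X F : Type*} [MeasurableSpace X] [NormedAddCommGroup F] [NormedSpace ℝ F]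
  {μ ν : Measure X} [SigmaFinite μ]

lemma ae_eq_zero_of_singularPart_of_rnDeriv_smul [SigmaFinite ν] {w : X → F}
    (hsing : w =ᵐ[μ.singularPart ν] 0) (hac : ∀ᵐ x ∂ν, (μ.rnDeriv ν x).toReal • w x = 0) :
    w =ᵐ[μ] 0 := by
  rw [← Measure.singularPart_add_rnDeriv μ ν, EventuallyEq, ae_add_measure_iff,
    ae_withDensity_iff (Measure.measurable_rnDeriv μ ν)]
  refine ⟨hsing, ?_⟩
  filter_upwards [hac, Measure.rnDeriv_ne_top μ ν] with x hx hx_top hx_ne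
  exact (smul_eq_zero.1 hx).resolve_left (ENNReal.toReal_ne_zero.2 ⟨hx_ne, hx_top⟩)

lemma lintegral_enorm_rnDeriv_smul_sq_div_le (w : X → F) :
    ∫⁻ x, ‖(μ.rnDeriv ν x).toReal • w x‖ₑ ^ 2 / ENNReal.ofReal (μ.rnDeriv ν x).toReal ∂ν
      ≤ ∫⁻ x, ‖w x‖ₑ ^ 2 ∂μ := by
  calc _ ≤ ∫⁻ x, μ.rnDeriv ν x * ‖w x‖ₑ ^ 2 ∂ν := by
        refine lintegral_mono_ae ?_
        filter_upwards [Measure.rnDeriv_ne_top μ ν] with x hx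
        have hsq : ‖(μ.rnDeriv ν x).toReal • w x‖ₑ ^ 2
            = μ.rnDeriv ν x * (μ.rnDeriv ν x * ‖w x‖ₑ ^ 2) := by
          rw [enorm_smul, Real.enorm_of_nonneg ENNReal.toReal_nonneg, ENNReal.ofReal_toReal hx]
          ring
        rw [hsq, ENNReal.ofReal_toReal hx, mul_div_assoc]
        exact ENNReal.mul_div_le
    _ = ∫⁻ x, ‖w x‖ₑ ^ 2 ∂ν.withDensity (μ.rnDeriv ν) :=
        (lintegral_withDensity_eq_lintegral_mul_non_measurable ν (Measure.measurable_rnDeriv μ ν)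
          (Measure.rnDeriv_lt_top μ ν) _).symm
    _ ≤ ∫⁻ x, ‖w x‖ₑ ^ 2 ∂μ := lintegral_mono' (Measure.withDensity_rnDeriv_le μ ν) le_rfl

end RnDeriv

section EntireDensity

lemma exists_testFunction_eqOn_ball_one {V : Type*} [NormedAddCommGroup V]
    [InnerProductSpace ℝ V] [FiniteDimensional ℝ V] {R : ℝ} (hR : 0 < R) :
    ∃ χ : 𝓓((⊤ : Opens V), ℂ), ∀ x ∈ Metric.ball 0 R, χ x = 1 := by
  let bump : ContDiffBump (0 : V) := ⟨R, R + 1, hR, lt_add_one R⟩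
  refine ⟨⟨fun x => (bump x : ℂ), ofRealCLM.contDiff.comp bump.contDiff,
    bump.hasCompactSupport.comp_left ofReal_zero, Set.subset_univ _⟩, fun x hx => ?_⟩
  exact congrArg ofReal (bump.one_of_mem_closedBall (Metric.ball_subset_closedBall hx))

variable {V : Type*} [NormedAddCommGroup V] [InnerProductSpace ℝ V] [FiniteDimensional ℝ V]
  [MeasurableSpace V] [BorelSpace V] {Ω : Opens V} {μ : Measure V} [μ.HasTemperateGrowth]

lemma exists_entire_density_of_integral_laplace_eq_zero {w : V → ℂ} (hw : MemLp w 2 μ)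
    (hΩ : Bornology.IsBounded (Ω : Set V)ᶜ)
    (hann : ∀ h : 𝓓(Ω, ℂ), ∫ u, laplace h (phase u) * w u ∂μ = 0) :
    ∃ Ψ : (V →L[ℝ] ℂ) → ℂ, Differentiable ℂ Ψ ∧ w =ᵐ[μ.singularPart volume] 0 ∧
      (fun v => (μ.rnDeriv volume v).toReal • w v) =ᵐ[volume] fun v => Ψ (phase v) := by
  have := isLocallyFiniteMeasure_of_hasTemperateGrowth μ
  obtain ⟨N, hwN⟩ := exists_integrable_inv_one_add_norm_pow_mul_norm_of_memLp_two hw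
  obtain ⟨R, hR, hΩR⟩ := hΩ.subset_ball_lt 0 0
  obtain ⟨χ, hχ⟩ := exists_testFunction_eqOn_ball_one (V := V) hR
  have hmollify := differentiable_mollify hw.1 hwN χ
  let Ψ (ζ : V →L[ℝ] ℂ) : ℂ := ((2 * Real.pi) ^ finrank ℝ V : ℂ)⁻¹ * mollify μ w χ ζ
  have hΨ : Differentiable ℂ Ψ := hmollify.const_mul _
  refine ⟨Ψ, hΨ, ae_eq_zero_and_rnDeriv_smul_ae_eq_of_integral_contDiff_smul
    (hw.locallyIntegrable one_le_two)
    (hΨ.continuous.comp phase.continuous).locallyIntegrable fun g hg hgs => ?_⟩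
  have hπ : (2 * Real.pi : ℂ) ^ finrank ℝ V ≠ 0 := pow_ne_zero _ (by simp [Real.pi_ne_zero])
  simp only [Ψ, ← mul_smul_comm, integral_const_mul,
    integral_smul_mollify_phase_eq hw.1 hwN hann hR hΩR hχ hg.continuous hgs]
  rw [inv_mul_cancel_left₀ hπ]

end EntireDensity

section Density

variable {V : Type*} [NormedAddCommGroup V] [InnerProductSpace ℝ V] [FiniteDimensional ℝ V]
  [MeasurableSpace V] [BorelSpace V] {Ω : Opens V}

lemma dist_toLp_two {X F : Type*} [MeasurableSpace X] [NormedAddCommGroup F] {μ : Measure X}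
    {f g : X → F} (hf : MemLp f 2 μ) (hg : MemLp g 2 μ) :
    dist hf.toLp hg.toLp = √(∫ x, ‖f x - g x‖ ^ 2 ∂μ) := by
  rw [dist_edist, Lp.edist_toLp_toLp,
    (hf.sub hg).eLpNorm_eq_integral_rpow_norm two_ne_zero ENNReal.ofNat_ne_top,
    ENNReal.toReal_ofReal (by positivity), Real.sqrt_eq_rpow]
  simp

/-- The Fourier transform as a linear map from test functions supported in `Ω` to `L²(μ)`. -/
def fourierToL2 (μ : Measure V) [μ.HasTemperateGrowth] (Ω : Opens V) : 𝓓(Ω, ℂ) →ₗ[ℂ] Lp ℂ 2 μ where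
  toFun h := (memLp_two_laplace_phase h).toLp
  map_add' h₁ h₂ := by
    rw [← MemLp.toLp_add]
    exact MemLp.toLp_congr _ _ (.of_forall fun u => (isLinearMap_laplace (phase u)).map_add h₁ h₂)
  map_smul' c h := by
    rw [RingHom.id_apply, ← MemLp.toLp_const_smul]
    exact MemLp.toLp_congr _ _ (.of_forall fun u => (isLinearMap_laplace (phase u)).map_smul c h)

variable {μ : Measure V} [μ.HasTemperateGrowth]

lemma topologicalClosure_range_fourierToL2
    (huniq : ∀ w : V → ℂ, MemLp w 2 μ →
      (∀ h : 𝓓(Ω, ℂ), ∫ u, laplace h (phase u) * w u ∂μ = 0) → w =ᵐ[μ] 0) :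
    (LinearMap.range (fourierToL2 μ Ω)).topologicalClosure = ⊤ := by
  rw [Submodule.topologicalClosure_eq_top_iff, Submodule.eq_bot_iff]
  intro φ hφ
  have hconj := huniq (fun u => star (φ u)) (Lp.memLp φ).star fun h => ?_
  · rw [Lp.eq_zero_iff_ae_eq_zero]
    exact hconj.mono fun u hu => star_eq_zero.1 hu
  · rw [← Submodule.inner_left_of_mem_orthogonal
      (LinearMap.mem_range_self (fourierToL2 μ Ω) h) hφ, L2.inner_def]
    refine integral_congr_ae ?_
    filter_upwards [(memLp_two_laplace_phase (μ := μ) h).coeFn_toLp] with u hu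
    rw [← hu]
    rfl

lemma exists_testFunction_integral_norm_sub_sq_lt
    (huniq : ∀ w : V → ℂ, MemLp w 2 μ →
      (∀ h : 𝓓(Ω, ℂ), ∫ u, laplace h (phase u) * w u ∂μ = 0) → w =ᵐ[μ] 0)
    {F : V → ℂ} (hF : MemLp F 2 μ) {ε : ℝ} (hε : 0 < ε) :
    ∃ h : 𝓓(Ω, ℂ), ∫ u, ‖F u - laplace h (phase u)‖ ^ 2 ∂μ < ε := by
  have hdense : Dense (LinearMap.range (fourierToL2 μ Ω) : Set (Lp ℂ 2 μ)) :=
    Submodule.dense_iff_topologicalClosure_eq_top.2 (topologicalClosure_range_fourierToL2 huniq)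
  obtain ⟨_, ⟨h, rfl⟩, hh⟩ := hdense.exists_dist_lt (hF.toLp F) (Real.sqrt_pos.2 hε)
  refine ⟨h, ?_⟩
  have hdist : dist (hF.toLp F) (fourierToL2 μ Ω h)
      = √(∫ u, ‖F u - laplace h (phase u)‖ ^ 2 ∂μ) := dist_toLp_two hF (memLp_two_laplace_phase h)
  rwa [hdist, Real.sqrt_lt_sqrt_iff (by positivity)] at hh

end Density

section Rigidity

variable {d : ℕ}

/-- A spectral density `s` is determining if zero is the only function with an entire extension to
`ℂ^d` that is square integrable against `1 / s`; division in `ℝ≥0∞` makes the integrand infinite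
where `s = 0` and `ψ ≠ 0`. -/
def IsDetermining (s : Ed d → ℝ) : Prop :=
  ∀ ψ : Ed d → ℂ,
    (∃ Ψ : (Fin d → ℂ) → ℂ, Differentiable ℂ Ψ ∧ ∀ u : Ed d, Ψ (fun i => (u i : ℂ)) = ψ u) →
    ∫⁻ u, ‖ψ u‖ₑ ^ 2 / ENNReal.ofReal (s u) < ⊤ → ∀ u, ψ u = 0

lemma phase_eq_sum_smul (u : Ed d) :
    phase u = ∑ i, (u i : ℂ) • phase (EuclideanSpace.single i (1 : ℝ)) := by
  ext x
  simp [phase_apply, PiLp.inner_apply, Finset.mul_sum, mul_comm, mul_left_comm]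

variable {S : Measure (Ed d)} [S.HasTemperateGrowth] {Ω : Opens (Ed d)}

lemma IsDetermining.ae_eq_zero (hS : IsDetermining fun u => (S.rnDeriv volume u).toReal)
    (hΩ : Bornology.IsBounded (Ω : Set (Ed d))ᶜ) {w : Ed d → ℂ} (hw : MemLp w 2 S)
    (hann : ∀ h : 𝓓(Ω, ℂ), ∫ u, laplace h (phase u) * w u ∂S = 0) : w =ᵐ[S] 0 := by
  have := isLocallyFiniteMeasure_of_hasTemperateGrowth S
  obtain ⟨Ψ, hΨ, hsing, hac⟩ := exists_entire_density_of_integral_laplace_eq_zero hw hΩ hann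
  have hfinite : ∫⁻ u, ‖Ψ (phase u)‖ₑ ^ 2 / ENNReal.ofReal (S.rnDeriv volume u).toReal < ⊤ := by
    calc _ = ∫⁻ u, ‖(S.rnDeriv volume u).toReal • w u‖ₑ ^ 2
            / ENNReal.ofReal (S.rnDeriv volume u).toReal :=
          lintegral_congr_ae (hac.mono fun u hu => by simp only [← hu])
      _ ≤ ∫⁻ u, ‖w u‖ₑ ^ 2 ∂S := lintegral_enorm_rnDeriv_smul_sq_div_le w
      _ < ⊤ := by
        simpa only [hasFiniteIntegral_iff_enorm, enorm_pow, enorm_norm, ENNReal.toReal_ofNat]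
          using (hw.integrable_norm_pow two_ne_zero).2
  have hzero : ∀ u, Ψ (phase u) = 0 := hS _
    ⟨fun z => Ψ (∑ i, z i • phase (EuclideanSpace.single i (1 : ℝ))), hΨ.comp (by fun_prop),
      fun u => by rw [phase_eq_sum_smul]⟩ hfinite
  exact ae_eq_zero_of_singularPart_of_rnDeriv_smul hsing (hac.mono fun u hu => hu.trans (hzero u))

lemma IsCBS.integrable {A : Set (Ed d)} {f : Ed d → ℂ} (hf : IsCBS A f) : Integrable f := by
  obtain ⟨hmeas, ⟨C, hC⟩, hbdd, -⟩ := hf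
  exact (integrableOn_iff_integrable_of_support_subset subset_closure).1
    (Measure.integrableOn_of_bounded hbdd.isCompact_closure.measure_lt_top.ne
      hmeas.aestronglyMeasurable (.of_forall hC))

lemma IsCBS.continuous_FT {A : Set (Ed d)} {f : Ed d → ℂ} (hf : IsCBS A f) : Continuous (FT f) :=
  (differentiable_laplace hf.integrable hf.2.2.1).continuous.comp phase.continuous

lemma isCBS_zero (A : Set (Ed d)) : IsCBS A 0 :=
  ⟨measurable_zero, ⟨0, by simp⟩, by simp, by simp⟩

lemma isCBS_testFunction {A : Set (Ed d)} (hΩ : (Ω : Set (Ed d)) ⊆ A) (h : 𝓓(Ω, ℂ)) : IsCBS A h :=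
  ⟨h.continuous.measurable, h.hasCompactSupport.exists_bound_of_continuous h.continuous,
    h.hasCompactSupport.isCompact.isBounded.subset (subset_tsupport h),
    (subset_tsupport h).trans (h.tsupport_subset.trans hΩ)⟩

theorem determining_density_rigid_on_bounded_general (S : Measure (Ed d)) [S.HasTemperateGrowth]
    (hS : IsDetermining fun u => (S.rnDeriv volume u).toReal) {A : Set (Ed d)}
    (hA : Bornology.IsBounded A) : LMR S A := by
  intro f hf ε hε
  by_cases hFf : MemLp (FT f) 2 S
  · let Ω : Opens (Ed d) := ⟨(closure A)ᶜ, isClosed_closure.isOpen_compl⟩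
    have hΩ : Bornology.IsBounded (Ω : Set (Ed d))ᶜ := by simpa [Ω] using hA.closure
    have hΩA : (Ω : Set (Ed d)) ⊆ Aᶜ := Set.compl_subset_compl.2 subset_closure
    obtain ⟨h, hh⟩ := exists_testFunction_integral_norm_sub_sq_lt (Ω := Ω)
      (fun w hw hann => hS.ae_eq_zero hΩ hw hann) hFf hε
    exact ⟨h, isCBS_testFunction hΩA h, by simpa only [FT_eq_laplace_phase] using hh⟩
  · -- The Bochner integral of a non-integrable function is `0`, so `h = 0` qualifies.
    have hnot : ¬Integrable (fun u => ‖FT f u‖ ^ 2) S :=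
      mt (memLp_two_iff_integrable_sq_norm hf.continuous_FT.aestronglyMeasurable).2 hFf
    refine ⟨0, isCBS_zero Aᶜ, ?_⟩
    have hFT_zero (u : Ed d) : FT 0 u = 0 := by simp [FT]
    simpa only [hFT_zero, sub_zero, integral_undef hnot] using hε

end Rigidity

/-- Corollary 2: if the spectral density `s` (the Radon–Nikodym derivative of `S` w.r.t.
Lebesgue measure) is *determining* — the only function extending to an entire function on
`ℂ^d` with `∫ |ψ|²/s < ∞` (integrand `+∞` where `s = 0` and `ψ ≠ 0`) is `0` — then `S`
induces linear maximal rigidity on every bounded Borel set. -/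
theorem determining_density_rigid_on_bounded {d : ℕ}
    (S : Measure (Ed d))
    (hsymm : Measure.map (fun u : Ed d => -u) S = S)
    (hint : (∫⁻ u, ENNReal.ofReal (((1 + ‖u‖) ^ (d + 1))⁻¹) ∂S) < ⊤)
    (hdet : ∀ ψ : Ed d → ℂ,
      (∃ Ψ : (Fin d → ℂ) → ℂ, Differentiable ℂ Ψ ∧
        ∀ u : Ed d, Ψ (fun i => ((u i : ℝ) : ℂ)) = ψ u) →
      (∫⁻ u, (‖ψ u‖₊ : ℝ≥0∞) ^ 2 / ENNReal.ofReal ((S.rnDeriv volume u).toReal) ∂volume) < ⊤ →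
      ∀ u, ψ u = 0)
    (A : Set (Ed d)) (hA_meas : MeasurableSet A) (hA_bdd : Bornology.IsBounded A) :
    LMR S A := by
  have := hasTemperateGrowth_of_lintegral_lt_top hint
  exact determining_density_rigid_on_bounded_general S hdet hA_bdd
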